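/- Let d > 2 be an integer and C₀ > 0. There exist constants C > 0 and α₀ ∈ (0,1), depending only on d and C₀, such that for all α ∈ (0, α₀) and all x ∈ ℤ^d with 0 < ‖x‖ ≤ C₀/√α: g(x) − g_α(x) ≤ C·(‖x‖·√α)^{2d(d−2)/(d²+2d−4)}·g(x). -/

import Mathlib

/-!
Write `r = ‖x‖`, let `p_k` be the law of the walk at time `k` and let `2δ` be the exponent; only
`0 ≤ δ ≤ 1` and `2δ < d - 2` matter. Bernoulli's inequality gives `1 - (1 - α)^k ≤ (αk)^δ`, so that
`g(x) - g_α(x) ≤ α^δ ∑ k^δ p_k(x)`. In this sum the times `k ≤ r²` contribute at most `r^{2δ} g(x)`.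
For the times `k > r²` the on-diagonal bound `p_k(x) ≤ A k^{-d/2}` gives a contribution of at most a
multiple of `r^{2δ} r^{2-d}`, and `r^{2-d}` is in turn at most a multiple of `g(x)`.

The on-diagonal bound comes from Fourier inversion on the torus: the characteristic function of a
step is dominated by a product of functions of one coordinate, each Gaussian near its maxima. The
lower bound `g(x) ≥ c r^{2-d}` is a maximum principle: `(r² - 2d)^{-(d-2)/2}` is strictly
subharmonic far from the origin and vanishes at infinity, while `g` is positive, and harmonic off
the origin.
-/

open Filter

noncomputable section

/-- `srwP d k x` is the probability that the simple random walk on `ℤ^d`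
started at `0` is at `x` at time `k`. -/
def srwP (d : ℕ) : ℕ → (Fin d → ℤ) → ENNReal
  | 0, x => if x = 0 then 1 else 0
  | k + 1, x =>
      (2 * d : ENNReal)⁻¹ *
        ∑ i : Fin d, (srwP d k (x - Pi.single i 1) + srwP d k (x + Pi.single i 1))

/-- The Euclidean norm on `ℤ^d`. -/
def nrmZ (d : ℕ) (x : Fin d → ℤ) : ℝ := Real.sqrt (∑ i, ((x i : ℝ)) ^ 2)

/-- The Green's function of the simple random walk on `ℤ^d`. -/
def green (d : ℕ) (x : Fin d → ℤ) : ENNReal := ∑' k : ℕ, srwP d k x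

/-- Convolution of two `[0,∞]`-valued functions on `ℤ^d`. -/
def convE (d : ℕ) (f h : (Fin d → ℤ) → ENNReal) (z : Fin d → ℤ) : ENNReal :=
  ∑' x, f x * h (z - x)


/-- The Green's function `g_α(x) = Σ_k (1−α)^k P(X_k = x)` of the killed walk. -/
def greenK (d : ℕ) (α : ℝ) (x : Fin d → ℤ) : ENNReal :=
  ∑' k : ℕ, ENNReal.ofReal ((1 - α) ^ k) * srwP d k x

/-! ### Real inequalities -/

lemma one_add_sq_div_two_le_cosh (t : ℝ) : 1 + t ^ 2 / 2 ≤ Real.cosh t := by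
  have hsinh : (t / 2) ^ 2 ≤ Real.sinh (t / 2) ^ 2 := by
    rw [sq_le_sq, Real.abs_sinh]
    exact Real.self_le_sinh_iff.2 (abs_nonneg _)
  have hcosh : Real.cosh t = 1 + 2 * Real.sinh (t / 2) ^ 2 := by
    have h := Real.cosh_two_mul (t / 2)
    rw [mul_div_cancel₀ t two_ne_zero, Real.cosh_sq] at h
    linarith
  linarith

lemma sq_le_sq_half_log_div {y : ℝ} (hy : |y| < 1) :
    y ^ 2 ≤ ((Real.log (1 + y) - Real.log (1 - y)) / 2) ^ 2 := by
  wlog hy0 : 0 ≤ y generalizing y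
  · have h := this (y := -y) (by rwa [abs_neg]) (by linarith)
    rw [← sub_eq_add_neg, sub_neg_eq_add] at h
    linarith
  have h := Real.sum_range_le_log_div hy0 (abs_lt.1 hy).2 1
  rw [Real.log_div (by linarith) (by linarith [(abs_lt.1 hy).2])] at h
  refine pow_le_pow_left₀ hy0 ?_ 2
  norm_num at h
  linarith

/-- The left side is `2 (1 - y²)^{-p/2} cosh (p artanh y)`, and both factors have lower bounds that
are quadratic in `y`. -/
lemma two_add_le_one_add_rpow_neg_add_one_sub_rpow_neg {p y : ℝ} (hp : 0 ≤ p) (hy : |y| < 1) :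
    2 + p * (p + 1) * y ^ 2 ≤ (1 + y) ^ (-p) + (1 - y) ^ (-p) := by
  obtain ⟨hy₁, hy₂⟩ := abs_lt.1 hy
  have hadd : 0 < 1 + y := by linarith
  have hsub : 0 < 1 - y := by linarith
  set a := Real.log (1 + y) with ha
  set b := Real.log (1 - y) with hb
  have hlog : a + b ≤ -y ^ 2 := by
    rw [← Real.log_mul hadd.ne' hsub.ne']
    linarith [Real.log_le_sub_one_of_pos (mul_pos hadd hsub)]
  have hexp : 1 + p * y ^ 2 / 2 ≤ Real.exp (-(p * (a + b) / 2)) := by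
    nlinarith [Real.add_one_le_exp (-(p * (a + b) / 2))]
  have hcosh : 1 + p ^ 2 * y ^ 2 / 2 ≤ Real.cosh (p * ((a - b) / 2)) := by
    nlinarith [one_add_sq_div_two_le_cosh (p * ((a - b) / 2)), sq_le_sq_half_log_div hy,
      sq_nonneg p]
  calc 2 + p * (p + 1) * y ^ 2
      ≤ 2 * ((1 + p * y ^ 2 / 2) * (1 + p ^ 2 * y ^ 2 / 2)) := by
        have : 0 ≤ p ^ 3 * y ^ 4 := by positivity
        linarith
    _ ≤ 2 * (Real.exp (-(p * (a + b) / 2)) * Real.cosh (p * ((a - b) / 2))) := by gcongr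
    _ = (1 + y) ^ (-p) + (1 - y) ^ (-p) := by
        rw [Real.cosh_eq, mul_div_assoc', mul_div_cancel₀ _ two_ne_zero, mul_add, ← Real.exp_add,
          ← Real.exp_add, Real.rpow_def_of_pos hadd, Real.rpow_def_of_pos hsub, ← ha,
          ← hb, add_comm]
        ring_nf

lemma rpow_neg_mul_two_add_le {p u t : ℝ} (hp : 0 ≤ p) (ht : |t| < u) :
    u ^ (-p) * (2 + p * (p + 1) * t ^ 2 / u ^ 2) ≤ (u + t) ^ (-p) + (u - t) ^ (-p) := by
  have hu : 0 < u := (abs_nonneg t).trans_lt ht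
  have hy : |t / u| < 1 := by rwa [abs_div, abs_of_pos hu, div_lt_one hu]
  obtain ⟨hy₁, hy₂⟩ := abs_lt.1 hy
  have hadd : u + t = u * (1 + t / u) := by field_simp
  have hsub : u - t = u * (1 - t / u) := by field_simp
  rw [hadd, hsub, Real.mul_rpow hu.le (by linarith), Real.mul_rpow hu.le (by linarith), ← mul_add,
    mul_div_assoc, ← div_pow]
  exact mul_le_mul_of_nonneg_left (two_add_le_one_add_rpow_neg_add_one_sub_rpow_neg hp hy)
    (Real.rpow_nonneg hu.le _)

lemma one_sub_rpow_neg_lt {p z : ℝ} (hp : 0 < p) (hz : 0 < z) (hz2 : z ≤ 1 / 2)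
    (hpz : 2 * p * z ≤ 1) : (1 - z) ^ (-p) < 1 + p * z + p * (4 * p + 3) * z ^ 2 := by
  have hpos : 0 < 1 - z := by linarith
  set w := p * (z + 2 * z ^ 2) with hw
  have hw0 : 0 ≤ w := by positivity
  have hwz : w ≤ 2 * p * z := by rw [hw]; nlinarith [mul_pos hp hz]
  have hlog : -Real.log (1 - z) ≤ z + 2 * z ^ 2 := by
    have hinv : (1 - z)⁻¹ ≤ 1 + z + 2 * z ^ 2 := by
      rw [inv_le_iff_one_le_mul₀ hpos]
      nlinarith [mul_pos hz hz]
    linarith [Real.one_sub_inv_le_log_of_pos hpos]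
  have hexp : Real.exp w ≤ 1 + w + w ^ 2 := by
    have h := Real.abs_exp_sub_one_sub_id_le (x := w) (by rw [abs_of_nonneg hw0]; linarith)
    linarith [(abs_le.1 h).2]
  calc (1 - z) ^ (-p) = Real.exp (p * -Real.log (1 - z)) := by
        rw [Real.rpow_def_of_pos hpos]; ring_nf
    _ ≤ Real.exp w := Real.exp_le_exp.2 (mul_le_mul_of_nonneg_left hlog hp.le)
    _ ≤ 1 + w + (2 * p * z) ^ 2 := hexp.trans (by gcongr)
    _ < 1 + p * z + p * (4 * p + 3) * z ^ 2 := by rw [hw]; nlinarith [mul_pos hp (mul_pos hz hz)]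

lemma sub_one_rpow_neg_lt {p u : ℝ} (hp : 0 < p) (hu : 2 ≤ u) (hpu : 2 * p ≤ u) :
    (u - 1) ^ (-p) < u ^ (-p) * (1 + p * (u + 4 * p + 3) / u ^ 2) := by
  have hu0 : 0 < u := by linarith
  have hz : u⁻¹ ≤ 1 / 2 := by rw [one_div]; gcongr
  have hpz : 2 * p * u⁻¹ ≤ 1 := by rwa [← div_eq_mul_inv, div_le_one hu0]
  calc (u - 1) ^ (-p) = u ^ (-p) * (1 - u⁻¹) ^ (-p) := by
        rw [← Real.mul_rpow hu0.le (by linarith), mul_one_sub, mul_inv_cancel₀ hu0.ne']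
    _ < u ^ (-p) * (1 + p * u⁻¹ + p * (4 * p + 3) * u⁻¹ ^ 2) := by
        gcongr
        exact one_sub_rpow_neg_lt hp (by positivity) hz hpz
    _ = u ^ (-p) * (1 + p * (u + 4 * p + 3) / u ^ 2) := by
        field_simp
        ring

lemma one_le_rpow_add_one_sub_pow {α δ : ℝ} (hα : α ∈ Set.Icc 0 1) (hδ : δ ∈ Set.Icc 0 1)
    (k : ℕ) : 1 ≤ (α * k) ^ δ + (1 - α) ^ k := by
  have hαk : 0 ≤ α * k := mul_nonneg hα.1 k.cast_nonneg
  have hpow : 0 ≤ (1 - α) ^ k := pow_nonneg (by linarith [hα.2]) k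
  rcases le_total (α * k) 1 with h | h
  · have hbernoulli := one_add_mul_le_pow (a := -α) (by linarith [hα.2]) k
    rw [← sub_eq_add_neg] at hbernoulli
    linarith [Real.self_le_rpow_of_le_one hαk h hδ.2]
  · linarith [Real.one_le_rpow h hδ.1]

lemma sum_range_rpow_neg_le {s : ℝ} (hs : 1 < s) {N : ℕ} (hN : 0 < N) (n : ℕ) :
    ∑ i ∈ Finset.range n, (N + (i + 1 : ℕ) : ℝ) ^ (-s) ≤ (N : ℝ) ^ (1 - s) / (s - 1) := by
  have hN' : (0 : ℝ) < N := by exact_mod_cast hN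
  have hanti : AntitoneOn (fun x : ℝ => x ^ (-s)) (Set.Icc N (N + n)) := fun x hx y _ hxy =>
    Real.rpow_le_rpow_of_nonpos (hN'.trans_le hx.1) hxy (by linarith)
  have hint : ∫ x in (N : ℝ)..N + n, x ^ (-s) =
      ((N : ℝ) ^ (1 - s) - (N + n : ℝ) ^ (1 - s)) / (s - 1) := by
    rw [integral_rpow (Or.inr ⟨by linarith, Set.notMem_uIcc_of_lt hN' (by positivity)⟩),
      neg_add_eq_sub, ← neg_div_neg_eq, neg_sub, neg_sub]
  refine hanti.sum_le_integral.trans (hint.trans_le ?_)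
  refine div_le_div_of_nonneg_right ?_ (by linarith)
  linarith [Real.rpow_nonneg (by positivity : (0 : ℝ) ≤ N + n) (1 - s)]

/-- Up to time `N` the weight is at most `N ^ δ`; after time `N` the decay of `p` takes over. -/
lemma tsum_rpow_mul_le {p : ℕ → ENNReal} {A β δ : ℝ} (hA : 0 ≤ A) (hδ : 0 ≤ δ) (hβ : δ + 1 < β)
    (hp : ∀ k, 0 < k → p k ≤ ENNReal.ofReal (A * (k : ℝ) ^ (-β))) {N : ℕ} (hN : 0 < N) :
    ∑' k : ℕ, ENNReal.ofReal ((k : ℝ) ^ δ) * p k ≤ ENNReal.ofReal ((N : ℝ) ^ δ) * ∑' k, p k +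
      ENNReal.ofReal (A / (β - δ - 1) * (N : ℝ) ^ (δ + 1 - β)) := by
  rw [← Summable.sum_add_tsum_nat_add' (k := N + 1) ENNReal.summable]
  gcongr
  · calc ∑ k ∈ Finset.range (N + 1), ENNReal.ofReal ((k : ℝ) ^ δ) * p k
        ≤ ∑ k ∈ Finset.range (N + 1), ENNReal.ofReal ((N : ℝ) ^ δ) * p k := by
          gcongr with k hk
          exact Finset.mem_range_succ_iff.1 hk
      _ ≤ ENNReal.ofReal ((N : ℝ) ^ δ) * ∑' k, p k := by
          rw [← Finset.mul_sum]
          gcongr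
          exact ENNReal.sum_le_tsum _
  · have hterm (j : ℕ) : ENNReal.ofReal (((j + (N + 1) : ℕ) : ℝ) ^ δ) * p (j + (N + 1)) ≤
        ENNReal.ofReal (A * (N + (j + 1 : ℕ) : ℝ) ^ (-(β - δ))) := by
      have hk : (0 : ℝ) < (N + (j + 1 : ℕ) : ℝ) := by positivity
      rw [show j + (N + 1) = N + (j + 1) by ring]
      refine (mul_le_mul_right (hp _ (by omega)) _).trans_eq ?_
      rw [← ENNReal.ofReal_mul (by positivity), Nat.cast_add, neg_sub, sub_eq_add_neg,
        Real.rpow_add hk]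
      ring_nf
    refine (ENNReal.tsum_le_tsum hterm).trans (ENNReal.tsum_le_of_sum_range_le fun n => ?_)
    rw [← ENNReal.ofReal_sum_of_nonneg fun j _ => by positivity, ← Finset.mul_sum]
    refine ENNReal.ofReal_le_ofReal ?_
    calc A * ∑ j ∈ Finset.range n, (N + (j + 1 : ℕ) : ℝ) ^ (-(β - δ))
        ≤ A * ((N : ℝ) ^ (1 - (β - δ)) / (β - δ - 1)) := by
          gcongr
          exact sum_range_rpow_neg_le (by linarith) hN n
      _ = A / (β - δ - 1) * (N : ℝ) ^ (δ + 1 - β) := by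
          rw [show 1 - (β - δ) = δ + 1 - β by ring]
          ring

/-! ### Means over neighbours -/

/-- The mean of `f` over the `2d` neighbours of `x` in `ℤ^d`, for functions with values in `[0,∞]`
(the law of the walk, the Green's function) or in `ℝ` or `ℂ`. Junk value `0` for `d = 0`. -/
def neighborMean {R : Type*} [Semiring R] [Inv R] {d : ℕ} (f : (Fin d → ℤ) → R)
    (x : Fin d → ℤ) : R :=
  (2 * d : R)⁻¹ * ∑ i, (f (x - Pi.single i 1) + f (x + Pi.single i 1))

section neighborMean

variable {d : ℕ} {x : Fin d → ℤ}

lemma srwP_succ (k : ℕ) (x : Fin d → ℤ) : srwP d (k + 1) x = neighborMean (srwP d k) x := rfl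

lemma neighborMean_const_mul {R : Type*} [CommSemiring R] [Inv R] (c : R)
    (f : (Fin d → ℤ) → R) : neighborMean (fun y => c * f y) x = c * neighborMean f x := by
  simp only [neighborMean, ← mul_add, ← Finset.mul_sum]
  rw [mul_left_comm]

lemma neighborMean_sub {R : Type*} [CommRing R] [Inv R] (f g : (Fin d → ℤ) → R) :
    neighborMean (fun y => f y - g y) x = neighborMean f x - neighborMean g x := by
  simp only [neighborMean, ← mul_sub, ← Finset.sum_sub_distrib, add_sub_add_comm]

lemma integral_neighborMean {𝕜 Ω : Type*} [RCLike 𝕜] [MeasurableSpace Ω]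
    {μ : MeasureTheory.Measure Ω} {F : (Fin d → ℤ) → Ω → 𝕜}
    (hF : ∀ y, MeasureTheory.Integrable (F y) μ) :
    ∫ ω, neighborMean (fun y => F y ω) x ∂μ = neighborMean (fun y => ∫ ω, F y ω ∂μ) x := by
  simp only [neighborMean]
  rw [MeasureTheory.integral_const_mul,
    MeasureTheory.integral_finsetSum _ fun i _ => (hF _).fun_add (hF _)]
  simp only [MeasureTheory.integral_add (hF _) (hF _)]

lemma neighborMean_ne_top {f : (Fin d → ℤ) → ENNReal} (hf : ∀ y, f y ≠ ⊤) :
    neighborMean f x ≠ ⊤ := by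
  rcases eq_or_ne d 0 with rfl | hd
  · simp [neighborMean]
  · exact ENNReal.mul_ne_top (by simpa using hd)
      (ENNReal.sum_ne_top.2 fun i _ => ENNReal.add_ne_top.2 ⟨hf _, hf _⟩)

lemma neighborMean_pos {f : (Fin d → ℤ) → ENNReal} (i : Fin d)
    (hi : 0 < f (x - Pi.single i 1) + f (x + Pi.single i 1)) : 0 < neighborMean f x := by
  refine ENNReal.mul_pos (by simp [ENNReal.mul_eq_top]) (ne_of_gt ?_)
  exact hi.trans_le (Finset.single_le_sum
    (f := fun j => f (x - Pi.single j 1) + f (x + Pi.single j 1))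
    (fun _ _ => zero_le) (Finset.mem_univ i))

lemma toReal_neighborMean {f : (Fin d → ℤ) → ENNReal} (hf : ∀ y, f y ≠ ⊤) :
    (neighborMean f x).toReal = neighborMean (fun y => (f y).toReal) x := by
  rw [neighborMean, ENNReal.toReal_mul,
    ENNReal.toReal_sum fun i _ => ENNReal.add_ne_top.2 ⟨hf _, hf _⟩]
  simp [neighborMean, ENNReal.toReal_add (hf _) (hf _)]

lemma srwP_ne_top (k : ℕ) (x : Fin d → ℤ) : srwP d k x ≠ ⊤ := by
  induction k generalizing x with
  | zero => rw [srwP]; split_ifs <;> simp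
  | succ k ih => exact neighborMean_ne_top ih

lemma neighborMean_le {f : (Fin d → ℤ) → ℝ} {M : ℝ} (hM : 0 ≤ M) (hf : ∀ y, f y ≤ M) :
    neighborMean f x ≤ M := by
  calc neighborMean f x ≤ (2 * d : ℝ)⁻¹ * ∑ _i : Fin d, (M + M) := by
        rw [neighborMean]
        gcongr <;> exact hf _
    _ = (2 * d : ℝ)⁻¹ * (2 * d) * M := by
        rw [Finset.sum_const, Finset.card_univ, Fintype.card_fin, nsmul_eq_mul]
        ring
    _ ≤ M := mul_le_of_le_one_left hM (inv_mul_le_one)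

/-- A positive value of `v - g` would force a global maximum, attained where `v - g` is strictly
subharmonic. -/
lemma le_of_lt_neighborMean {v g : (Fin d → ℤ) → ℝ} {S : Set (Fin d → ℤ)}
    (hS : ∀ y ∈ S, v y ≤ g y) (hv : ∀ y ∉ S, v y < neighborMean v y)
    (hg : ∀ y ∉ S, neighborMean g y ≤ g y) (hg0 : ∀ y, 0 ≤ g y)
    (hlim : Tendsto v cofinite (nhds 0)) (x : Fin d → ℤ) : v x ≤ g x := by
  by_contra! hx
  set f : (Fin d → ℤ) → ℝ := fun y => v y - g y
  have hfx : 0 < f x := sub_pos.2 hx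
  have hfin : {y | f x ≤ f y}.Finite := by
    refine (eventually_cofinite.1 (hlim.eventually_lt_const hfx)).subset fun y hy => ?_
    exact not_lt.2 (hy.trans (sub_le_self _ (hg0 y)))
  obtain ⟨y, hy, hmax⟩ := Set.exists_max_image _ f hfin ⟨x, le_refl (f x)⟩
  have hfy : 0 < f y := hfx.trans_le hy
  have hle (z : Fin d → ℤ) : f z ≤ f y := (le_total (f x) (f z)).elim (hmax z) (·.trans hy)
  have hyS : y ∉ S := fun h => (sub_nonpos.2 (hS y h)).not_gt hfy
  have hmean : f y < neighborMean f y := by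
    rw [neighborMean_sub]
    linarith [hv y hyS, hg y hyS]
  exact hmean.not_ge (neighborMean_le hfy.le hle)

end neighborMean

/-! ### The Euclidean norm on the lattice -/

section nrmZ

variable {d : ℕ} (x : Fin d → ℤ)

lemma nrmZ_nonneg : 0 ≤ nrmZ d x := Real.sqrt_nonneg _

lemma nrmZ_sq : nrmZ d x ^ 2 = ∑ i, (x i : ℝ) ^ 2 := Real.sq_sqrt (by positivity)

lemma nrmZ_pos_iff {x : Fin d → ℤ} : 0 < nrmZ d x ↔ x ≠ 0 := by
  rw [nrmZ, Real.sqrt_pos, (Finset.sum_nonneg fun i _ => sq_nonneg _).lt_iff_ne', ne_eq,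
    Finset.sum_eq_zero_iff_of_nonneg fun i _ => sq_nonneg _]
  simp [funext_iff]

lemma exists_nat_eq_nrmZ_sq : ∃ N : ℕ, (N : ℝ) = nrmZ d x ^ 2 :=
  ⟨∑ i, (x i).natAbs ^ 2, by simp [nrmZ_sq]⟩

lemma abs_apply_le_nrmZ (i : Fin d) : |(x i : ℝ)| ≤ nrmZ d x := by
  refine Real.abs_le_sqrt ?_
  exact Finset.single_le_sum (f := fun j => (x j : ℝ) ^ 2) (fun j _ => sq_nonneg _)
    (Finset.mem_univ i)

lemma nrmZ_add_single_sq (i : Fin d) (c : ℤ) :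
    nrmZ d (x + Pi.single i c) ^ 2 = nrmZ d x ^ 2 + 2 * c * x i + c ^ 2 := by
  have hterm (j : Fin d) : (((x + Pi.single i c : Fin d → ℤ) j : ℤ) : ℝ) ^ 2 =
      (x j : ℝ) ^ 2 + if j = i then 2 * c * (x j : ℝ) + c ^ 2 else 0 := by
    rcases eq_or_ne j i with rfl | hj
    · simp
      ring
    · simp [hj]
  simp only [nrmZ_sq, hterm, Finset.sum_add_distrib, Finset.sum_ite_eq', Finset.mem_univ, if_true]
  ring

lemma tendsto_nrmZ_cofinite : Tendsto (nrmZ d) cofinite atTop := by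
  refine tendsto_atTop_mono (f := fun x => ‖x‖) (fun x => ?_) ?_
  · refine (pi_norm_le_iff_of_nonneg (nrmZ_nonneg x)).2 fun i => ?_
    rw [Int.norm_eq_abs]
    exact abs_apply_le_nrmZ x i
  · rw [← cocompact_eq_cofinite]
    exact tendsto_norm_cocompact_atTop

end nrmZ

/-! ### The on-diagonal bound -/

lemma integral_fourier (n : ℤ) :
    ∫ t : UnitAddCircle, fourier n t = if n = 0 then (1 : ℂ) else 0 := by
  split_ifs with hn
  · simp [hn, MeasureTheory.measureReal_def]
  · exact MeasureTheory.integral_eq_zero_of_add_right_eq_neg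
      (fourier_add_half_inv_index hn one_pos)

lemma integral_mFourier {ι : Type*} [Fintype ι] (n : ι → ℤ) :
    ∫ t : UnitAddTorus ι, UnitAddTorus.mFourier n t = if n = 0 then (1 : ℂ) else 0 := by
  have hprod := MeasureTheory.integral_fintype_prod_volume_eq_prod
    fun (i : ι) (t : UnitAddCircle) => fourier (n i) t
  refine hprod.trans ?_
  simp only [integral_fourier, Finset.prod_ite_zero, Finset.prod_const_one, funext_iff]
  simp

lemma norm_mFourier_apply {ι : Type*} [Fintype ι] (n : ι → ℤ) (t : UnitAddTorus ι) :
    ‖UnitAddTorus.mFourier n t‖ = 1 := by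
  rw [UnitAddTorus.mFourier, ContinuousMap.coe_mk, norm_prod]
  exact Finset.prod_eq_one fun i _ => Circle.norm_coe _

lemma integrable_of_continuous {X E : Type*} [TopologicalSpace X] [CompactSpace X]
    [MeasurableSpace X] [OpensMeasurableSpace X] [NormedAddCommGroup E]
    {μ : MeasureTheory.Measure X} [MeasureTheory.IsFiniteMeasureOnCompacts μ] {f : X → E}
    (hf : Continuous f) : MeasureTheory.Integrable f μ :=
  hf.integrable_of_hasCompactSupport (HasCompactSupport.of_compactSpace f)

/-- The characteristic function of a step of the walk, as a function on the torus `(ℝ/ℤ)^d`: the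
mean of the characters `mFourier n` over the steps `n`. -/
def srwChar {d : ℕ} (t : UnitAddTorus (Fin d)) : ℂ :=
  neighborMean (fun n => UnitAddTorus.mFourier n t) 0

section srwChar

variable {d : ℕ} (t : UnitAddTorus (Fin d))

lemma continuous_srwChar : Continuous (srwChar (d := d)) := by
  unfold srwChar neighborMean
  fun_prop

lemma srwChar_mul_mFourier (x : Fin d → ℤ) :
    srwChar t * UnitAddTorus.mFourier x t =
      neighborMean (fun y => UnitAddTorus.mFourier y t) x := by
  rw [srwChar, mul_comm, ← neighborMean_const_mul]
  simp only [neighborMean, ← UnitAddTorus.mFourier_add]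
  simp [sub_eq_add_neg]

lemma srwChar_eq : srwChar t = ((d : ℝ)⁻¹ * ∑ i, (fourier 1 (t i)).re : ℝ) := by
  have hpair (i : Fin d) : UnitAddTorus.mFourier (0 - Pi.single i 1) t +
      UnitAddTorus.mFourier (0 + Pi.single i 1) t = 2 * ((fourier 1 (t i)).re : ℂ) := by
    rw [zero_sub, zero_add, UnitAddTorus.mFourier_neg, UnitAddTorus.mFourier_single, add_comm,
      Complex.add_conj]
    simp
  simp only [srwChar, neighborMean, hpair, ← Finset.mul_sum]
  push_cast
  rw [mul_inv]
  ring

lemma abs_re_le_one_sub_im_sq {z : ℂ} (hz : ‖z‖ = 1) : |z.re| ≤ 1 - z.im ^ 2 / 2 := by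
  have h := Complex.sq_norm_sub_sq_im z
  rw [hz, one_pow] at h
  nlinarith [sq_nonneg (|z.re| - 1), sq_abs z.re]

lemma norm_srwChar_le :
    ‖srwChar t‖ ≤ Real.exp (-(∑ i, (fourier 1 (t i)).im ^ 2) / (2 * d)) := by
  rw [srwChar_eq, Complex.norm_real, Real.norm_eq_abs, abs_mul, abs_of_nonneg (by positivity)]
  calc (d : ℝ)⁻¹ * |∑ i, (fourier 1 (t i)).re|
      ≤ (d : ℝ)⁻¹ * ∑ i, (1 - (fourier 1 (t i)).im ^ 2 / 2) := by
        gcongr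
        refine (Finset.abs_sum_le_sum_abs _ _).trans (Finset.sum_le_sum fun i _ => ?_)
        exact abs_re_le_one_sub_im_sq (Circle.norm_coe _)
    _ = (d : ℝ)⁻¹ * d + -(∑ i, (fourier 1 (t i)).im ^ 2) / (2 * d) := by
        rw [Finset.sum_sub_distrib, ← Finset.sum_div, Finset.sum_const, Finset.card_univ,
          Fintype.card_fin, nsmul_eq_mul, mul_one, mul_sub, sub_eq_add_neg, neg_div, div_eq_mul_inv,
          div_eq_mul_inv, mul_inv]
        ring
    _ ≤ 1 + -(∑ i, (fourier 1 (t i)).im ^ 2) / (2 * d) := by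
        gcongr
        exact inv_mul_le_one
    _ ≤ Real.exp (-(∑ i, (fourier 1 (t i)).im ^ 2) / (2 * d)) := by
        rw [add_comm]
        exact Real.add_one_le_exp _

end srwChar

lemma srwP_eq_integral {d : ℕ} (k : ℕ) (x : Fin d → ℤ) :
    ((srwP d k x).toReal : ℂ) =
      ∫ t : UnitAddTorus (Fin d), srwChar t ^ k * UnitAddTorus.mFourier x t := by
  induction k generalizing x with
  | zero =>
    simp only [pow_zero, one_mul, integral_mFourier, srwP]
    split_ifs <;> simp
  | succ k ih =>
    have hint (y : Fin d → ℤ) : MeasureTheory.Integrable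
        fun t : UnitAddTorus (Fin d) => srwChar t ^ k * UnitAddTorus.mFourier y t :=
      integrable_of_continuous
        ((continuous_srwChar.pow k).mul (UnitAddTorus.mFourier y).continuous)
    have hstep (t : UnitAddTorus (Fin d)) : srwChar t ^ (k + 1) * UnitAddTorus.mFourier x t =
        neighborMean (fun y => srwChar t ^ k * UnitAddTorus.mFourier y t) x := by
      rw [pow_succ, mul_assoc, srwChar_mul_mFourier, neighborMean_const_mul]
    rw [srwP_succ, toReal_neighborMean (srwP_ne_top k)]
    simp_rw [hstep, integral_neighborMean hint, ← ih, neighborMean]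
    push_cast
    rfl

/-- On the quarter circle around `0`, Jordan's inequality gives `|sin 2πs| ≥ 4|s|`. -/
lemma exp_neg_mul_sin_sq_le {c s : ℝ} (hc : 0 ≤ c) (hs : |s| ≤ 1 / 4) :
    Real.exp (-c * Real.sin (2 * Real.pi * s) ^ 2) ≤ Real.exp (-(16 * c) * s ^ 2) := by
  have hsin : 4 * |s| ≤ |Real.sin (2 * Real.pi * s)| := by
    have h := Real.mul_abs_le_abs_sin (x := 2 * Real.pi * s) (by
      rw [abs_mul, abs_of_pos Real.two_pi_pos]
      nlinarith [Real.pi_pos])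
    rw [abs_mul, abs_of_pos Real.two_pi_pos] at h
    refine le_trans (le_of_eq ?_) h
    field_simp
    ring
  have hsq : 16 * s ^ 2 ≤ Real.sin (2 * Real.pi * s) ^ 2 := by
    rw [← sq_abs s, ← sq_abs (Real.sin _)]
    nlinarith [abs_nonneg s]
  rw [Real.exp_le_exp]
  nlinarith

lemma fourier_one_coe_im (s : ℝ) :
    (fourier 1 (s : UnitAddCircle)).im = Real.sin (2 * Real.pi * s) := by
  rw [← Complex.exp_ofReal_mul_I_im, fourier_coe_apply]
  push_cast
  ring_nf

lemma integral_exp_neg_mul_fourier_im_sq_le {c : ℝ} (hc : 0 < c) :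
    ∫ t : UnitAddCircle, Real.exp (-c * (fourier 1 t).im ^ 2) ≤ √(Real.pi / c) / 2 := by
  set f : ℝ → ℝ := fun s => Real.exp (-c * Real.sin (2 * Real.pi * s) ^ 2) with hf
  have hcont : Continuous f := by fun_prop
  have hgauss : MeasureTheory.Integrable fun s : ℝ => Real.exp (-(16 * c) * s ^ 2) :=
    integrable_exp_neg_mul_sq (by positivity)
  have hperiod : Function.Periodic f (1 / 2) := fun s => by
    simp only [hf]
    rw [show 2 * Real.pi * (s + 1 / 2) = 2 * Real.pi * s + Real.pi by ring, Real.sin_add_pi, neg_sq]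
  have hhalf : ∫ s in (-(1 / 4) : ℝ)..1 / 4, f s ≤ √(Real.pi / (16 * c)) := by
    rw [← integral_gaussian, intervalIntegral.integral_of_le (by norm_num)]
    refine (MeasureTheory.setIntegral_mono_on ?_ hgauss.integrableOn measurableSet_Ioc
      fun s hs => ?_).trans (MeasureTheory.setIntegral_le_integral hgauss
        (Eventually.of_forall fun s => (Real.exp_pos _).le))
    · exact (hcont.integrableOn_Icc).mono_set Set.Ioc_subset_Icc_self
    · exact exp_neg_mul_sin_sq_le hc.le (abs_le.2 ⟨hs.1.le, hs.2⟩)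
  calc ∫ t : UnitAddCircle, Real.exp (-c * (fourier 1 t).im ^ 2)
      = ∫ s in (-(1 / 4) : ℝ)..-(1 / 4) + 1, f s := by
        rw [← UnitAddCircle.intervalIntegral_preimage (-(1 / 4))]
        simp only [fourier_one_coe_im, hf]
    _ = 2 * ∫ s in (-(1 / 4) : ℝ)..1 / 4, f s := by
        have h := hperiod.intervalIntegral_add_eq_add (-(1 / 4)) (1 / 4)
          fun _ _ => hcont.intervalIntegrable _ _
        norm_num at h ⊢
        rw [h, two_mul]
    _ ≤ 2 * √(Real.pi / (16 * c)) := by gcongr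
    _ = √(Real.pi / c) / 2 := by
        rw [mul_comm 16 c, ← div_div, Real.sqrt_div (by positivity),
          show (16 : ℝ) = 4 ^ 2 by norm_num, Real.sqrt_sq (by norm_num)]
        ring

lemma srwP_le {d k : ℕ} (hd : 0 < d) (hk : 0 < k) (x : Fin d → ℤ) :
    srwP d k x ≤
      ENNReal.ofReal ((Real.pi * d / 2) ^ (d / 2 : ℝ) * (k : ℝ) ^ (-(d / 2 : ℝ))) := by
  have hk' : (0 : ℝ) < k := by exact_mod_cast hk
  set c : ℝ := k / (2 * d) with hc
  have hnorm (t : UnitAddTorus (Fin d)) : ‖srwChar t ^ k * UnitAddTorus.mFourier x t‖ ≤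
      ∏ i, Real.exp (-c * (fourier 1 (t i)).im ^ 2) := by
    calc ‖srwChar t ^ k * UnitAddTorus.mFourier x t‖
        = ‖srwChar t‖ ^ k := by
          rw [norm_mul, norm_pow, norm_mFourier_apply, mul_one]
      _ ≤ Real.exp (-(∑ i, (fourier 1 (t i)).im ^ 2) / (2 * d)) ^ k := by
          gcongr
          exact norm_srwChar_le t
      _ = ∏ i, Real.exp (-c * (fourier 1 (t i)).im ^ 2) := by
          rw [← Real.exp_nat_mul, ← Real.exp_sum, ← Finset.mul_sum, hc]
          ring_nf
  rw [← ENNReal.ofReal_toReal (srwP_ne_top k x)]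
  refine ENNReal.ofReal_le_ofReal ?_
  calc (srwP d k x).toReal
      = ‖∫ t : UnitAddTorus (Fin d), srwChar t ^ k * UnitAddTorus.mFourier x t‖ := by
        rw [← srwP_eq_integral, Complex.norm_of_nonneg ENNReal.toReal_nonneg]
    _ ≤ ∫ t : UnitAddTorus (Fin d), ∏ i, Real.exp (-c * (fourier 1 (t i)).im ^ 2) :=
        MeasureTheory.norm_integral_le_of_norm_le
          (integrable_of_continuous (by fun_prop)) (Eventually.of_forall hnorm)
    _ = (∫ t : UnitAddCircle, Real.exp (-c * (fourier 1 t).im ^ 2)) ^ d := by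
        rw [MeasureTheory.integral_fintype_prod_volume_eq_pow
          fun t : UnitAddCircle => Real.exp (-c * (fourier 1 t).im ^ 2), Fintype.card_fin]
    _ ≤ (√(Real.pi / c) / 2) ^ d := by
        gcongr
        exact integral_exp_neg_mul_fourier_im_sq_le (by positivity)
    _ = (Real.pi * d / 2) ^ (d / 2 : ℝ) * (k : ℝ) ^ (-(d / 2 : ℝ)) := by
        have hsq : (√(Real.pi / c) / 2) ^ 2 = Real.pi * d / 2 / k := by
          rw [div_pow, Real.sq_sqrt (by positivity), hc]
          field_simp
        rw [Real.rpow_neg hk'.le, ← div_eq_mul_inv, ← Real.div_rpow (by positivity) hk'.le, ← hsq,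
          ← Real.rpow_natCast _ 2, ← Real.rpow_mul (by positivity), ← Real.rpow_natCast]
        congr 1
        push_cast
        ring

/-! ### The Green's function -/

lemma green_eq (d : ℕ) (x : Fin d → ℤ) :
    green d x = (if x = 0 then 1 else 0) + neighborMean (green d) x := by
  simp only [green, neighborMean]
  rw [tsum_eq_zero_add' ENNReal.summable]
  simp only [srwP, ENNReal.tsum_mul_left, Summable.tsum_finsetSum fun _ _ => ENNReal.summable,
    ENNReal.tsum_add]

lemma green_ne_top {d : ℕ} (hd : 2 < d) (x : Fin d → ℤ) : green d x ≠ ⊤ := by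
  have hd' : (2 : ℝ) < d := by exact_mod_cast hd
  have hsum : Summable fun k : ℕ =>
      (Real.pi * d / 2) ^ (d / 2 : ℝ) * ((k + 1 : ℕ) : ℝ) ^ (-(d / 2 : ℝ)) :=
    ((summable_nat_add_iff 1).2 (Real.summable_nat_rpow.2 (by linarith))).mul_left _
  rw [green, tsum_eq_zero_add' ENNReal.summable]
  refine ENNReal.add_ne_top.2 ⟨srwP_ne_top 0 x, ne_top_of_le_ne_top hsum.tsum_ofReal_ne_top ?_⟩
  exact ENNReal.tsum_le_tsum fun k => srwP_le (by omega) k.succ_pos x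

lemma green_toReal_eq_neighborMean {d : ℕ} (hd : 2 < d) {x : Fin d → ℤ} (hx : x ≠ 0) :
    (green d x).toReal = neighborMean (fun y => (green d y).toReal) x := by
  rw [← toReal_neighborMean (green_ne_top hd), green_eq, if_neg hx, zero_add]

lemma green_pos {d : ℕ} (x : Fin d → ℤ) : 0 < green d x := by
  have hneighbor {y : Fin d → ℤ} (i : Fin d)
      (h : 0 < green d (y - Pi.single i 1) + green d (y + Pi.single i 1)) : 0 < green d y := by
    rw [green_eq]
    exact (neighborMean_pos i h).trans_le le_add_self
  have htranslate : ∀ y, 0 < green d y → 0 < green d (y + x) := by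
    induction x using Pi.single_induction with
    | zero => simp
    | add z w hz hw => exact fun y hy => by simpa only [add_assoc] using hw _ (hz y hy)
    | single i n =>
      intro y hy
      induction n using Int.induction_on with
      | zero => simpa using hy
      | succ n ih =>
        refine hneighbor i (lt_of_lt_of_le ?_ le_self_add)
        rwa [Pi.single_add, ← add_assoc, add_sub_cancel_right]
      | pred n ih =>
        refine hneighbor i (lt_of_lt_of_le ?_ le_add_self)
        rwa [Pi.single_sub, ← add_sub_assoc, sub_add_cancel]
  have hzero : 0 < green d 0 := by
    rw [green_eq, if_pos rfl]
    exact one_pos.trans_le le_self_add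
  simpa using htranslate 0 hzero

/-! ### Lower bound on the Green's function -/

/-- A comparison function of order `‖x‖^{2-d}` at infinity, for the maximum principle. The shift by
`2d` makes it strictly subharmonic far from the origin. For `‖x‖² < 2d` its values are those of
`Real.rpow` at a negative base and carry no meaning. -/
def barrier (d : ℕ) (x : Fin d → ℤ) : ℝ := (nrmZ d x ^ 2 - 2 * d) ^ (-((d - 2) / 2 : ℝ))

section barrier

variable {d : ℕ} {x : Fin d → ℤ}

lemma le_barrier_add_barrier (hd : 2 ≤ d) {u : ℝ} (hu : u = nrmZ d x ^ 2 + 1 - 2 * d)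
    (hxu : 2 * nrmZ d x < u) (i : Fin d) :
    u ^ (-((d - 2) / 2 : ℝ)) * (2 + d * (d - 2) * (x i : ℝ) ^ 2 / u ^ 2) ≤
      barrier d (x - Pi.single i 1) + barrier d (x + Pi.single i 1) := by
  have hd' : (2 : ℝ) ≤ d := by exact_mod_cast hd
  have hxi : |2 * (x i : ℝ)| < u := by
    rw [abs_mul, abs_two]
    linarith [abs_apply_le_nrmZ x i]
  have hadd : nrmZ d (x + Pi.single i 1) ^ 2 - 2 * d = u + 2 * x i := by
    rw [nrmZ_add_single_sq, hu]
    push_cast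
    ring
  have hsub : nrmZ d (x - Pi.single i 1) ^ 2 - 2 * d = u - 2 * x i := by
    rw [sub_eq_add_neg x, ← Pi.single_neg, nrmZ_add_single_sq, hu]
    push_cast
    ring
  rw [barrier, barrier, hadd, hsub, add_comm ((u - 2 * (x i : ℝ)) ^ _)]
  refine le_trans (le_of_eq ?_)
    (rpow_neg_mul_two_add_le (p := (d - 2) / 2) (by linarith) hxi)
  ring

lemma le_neighborMean_barrier (hd : 2 ≤ d) {u : ℝ} (hu : u = nrmZ d x ^ 2 + 1 - 2 * d)
    (hxu : 2 * nrmZ d x < u) :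
    u ^ (-((d - 2) / 2 : ℝ)) * (1 + (d - 2) / 2 * nrmZ d x ^ 2 / u ^ 2) ≤
      neighborMean (barrier d) x := by
  calc u ^ (-((d - 2) / 2 : ℝ)) * (1 + (d - 2) / 2 * nrmZ d x ^ 2 / u ^ 2)
      = (2 * d : ℝ)⁻¹ *
          ∑ i, u ^ (-((d - 2) / 2 : ℝ)) * (2 + d * (d - 2) * (x i : ℝ) ^ 2 / u ^ 2) := by
        rw [← Finset.mul_sum, Finset.sum_add_distrib, ← Finset.sum_div, ← Finset.mul_sum,
          ← nrmZ_sq, Finset.sum_const, Finset.card_univ, Fintype.card_fin, nsmul_eq_mul]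
        field_simp
    _ ≤ neighborMean (barrier d) x := by
        rw [neighborMean]
        gcongr with i
        exact le_barrier_add_barrier hd hu hxu i

lemma barrier_lt_neighborMean (hd : 2 < d) (hx : 4 * d ≤ nrmZ d x) :
    barrier d x < neighborMean (barrier d) x := by
  have hd' : (3 : ℝ) ≤ d := by exact_mod_cast hd
  obtain ⟨u, hu⟩ : ∃ u, u = nrmZ d x ^ 2 + 1 - 2 * d := ⟨_, rfl⟩
  have hxu : 2 * nrmZ d x < u := by nlinarith
  have hlt := sub_one_rpow_neg_lt (p := (d - 2) / 2) (u := u) (by linarith) (by linarith)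
    (by linarith)
  have hbase : u - 1 = nrmZ d x ^ 2 - 2 * d := by rw [hu]; ring
  have hsq : u + 4 * ((d - 2) / 2 : ℝ) + 3 = nrmZ d x ^ 2 := by rw [hu]; ring
  rw [hbase, hsq] at hlt
  exact hlt.trans_le (le_neighborMean_barrier hd.le hu hxu)

lemma tendsto_barrier_cofinite (hd : 2 < d) : Tendsto (barrier d) cofinite (nhds 0) := by
  have hd' : (2 : ℝ) < d := by exact_mod_cast hd
  refine (tendsto_rpow_neg_atTop (y := (d - 2) / 2) (by linarith)).comp ?_
  exact tendsto_atTop_add_const_right _ _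
    ((tendsto_pow_atTop two_ne_zero).comp tendsto_nrmZ_cofinite)

lemma nrmZ_rpow_le_barrier (hd : 2 < d) (hx : 4 * d ≤ nrmZ d x) :
    nrmZ d x ^ (2 - d : ℝ) ≤ barrier d x := by
  have hd' : (3 : ℝ) ≤ d := by exact_mod_cast hd
  calc nrmZ d x ^ (2 - d : ℝ) = (nrmZ d x ^ 2) ^ (-((d - 2) / 2 : ℝ)) := by
        rw [← Real.rpow_natCast, ← Real.rpow_mul (nrmZ_nonneg x)]
        push_cast
        ring_nf
    _ ≤ barrier d x :=
        Real.rpow_le_rpow_of_nonpos (by nlinarith) (by linarith) (by linarith)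

end barrier

lemma exists_pos_mul_le_of_finite {α : Type*} {S : Set α} (hS : S.Finite) (v : α → ℝ) {g : α → ℝ}
    (hg : ∀ a ∈ S, 0 < g a) : ∃ c : ℝ, 0 < c ∧ ∀ a ∈ S, c * v a ≤ g a := by
  obtain ⟨M, hM⟩ := (hS.image fun a => v a / g a).bddAbove
  have hpos : 0 < max M 1 := lt_max_of_lt_right one_pos
  refine ⟨(max M 1)⁻¹, inv_pos.2 hpos, fun a ha => ?_⟩
  rw [inv_mul_le_iff₀ hpos, ← div_le_iff₀ (hg a ha)]
  exact (hM (Set.mem_image_of_mem _ ha)).trans (le_max_left _ _)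

lemma exists_mul_nrmZ_rpow_le_green {d : ℕ} (hd : 2 < d) :
    ∃ c : ℝ, 0 < c ∧ ∀ x : Fin d → ℤ, c * nrmZ d x ^ (2 - d : ℝ) ≤ (green d x).toReal := by
  have hfin : {x | nrmZ d x < 4 * d}.Finite :=
    (eventually_cofinite.1 (tendsto_nrmZ_cofinite.eventually_ge_atTop (4 * d : ℝ))).subset
      fun x hx => not_le.2 hx
  obtain ⟨c, hc, hball⟩ := exists_pos_mul_le_of_finite hfin
    (fun x => max (barrier d x) (nrmZ d x ^ (2 - d : ℝ)))
    fun x _ => ENNReal.toReal_pos (green_pos x).ne' (green_ne_top hd x)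
  have hbarrier : ∀ x, c * barrier d x ≤ (green d x).toReal := by
    refine le_of_lt_neighborMean (S := {x | nrmZ d x < 4 * d}) (fun y hy => ?_) (fun y hy => ?_)
      (fun y hy => ?_) (fun _ => ENNReal.toReal_nonneg) ?_
    · exact (mul_le_mul_of_nonneg_left (le_max_left _ _) hc.le).trans (hball y hy)
    · rw [neighborMean_const_mul]
      exact mul_lt_mul_of_pos_left (barrier_lt_neighborMean hd (not_lt.1 hy)) hc
    · have hy0 : 0 < nrmZ d y := (by positivity : (0 : ℝ) < 4 * d).trans_le (not_lt.1 hy)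
      exact (green_toReal_eq_neighborMean hd (nrmZ_pos_iff.1 hy0)).ge
    · simpa using (tendsto_barrier_cofinite hd).const_mul c
  refine ⟨c, hc, fun x => ?_⟩
  rcases lt_or_ge (nrmZ d x) (4 * d) with hx | hx
  · exact (mul_le_mul_of_nonneg_left (le_max_right _ _) hc.le).trans (hball x hx)
  · exact (mul_le_mul_of_nonneg_left (nrmZ_rpow_le_barrier hd hx) hc.le).trans (hbarrier x)

/-! ### Comparison of the two Green's functions -/

lemma green_sub_greenK_le {d : ℕ} {α δ : ℝ} (hα : α ∈ Set.Icc 0 1) (hδ : δ ∈ Set.Icc 0 1)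
    (x : Fin d → ℤ) :
    green d x - greenK d α x ≤
      ENNReal.ofReal (α ^ δ) * ∑' k : ℕ, ENNReal.ofReal ((k : ℝ) ^ δ) * srwP d k x := by
  have hweight (k : ℕ) : 1 ≤ ENNReal.ofReal (α ^ δ) * ENNReal.ofReal ((k : ℝ) ^ δ) +
      ENNReal.ofReal ((1 - α) ^ k) := by
    have hαk : 0 ≤ (α * k) ^ δ := Real.rpow_nonneg (mul_nonneg hα.1 k.cast_nonneg) δ
    rw [← ENNReal.ofReal_mul (Real.rpow_nonneg hα.1 δ), ← Real.mul_rpow hα.1 k.cast_nonneg,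
      ← ENNReal.ofReal_add hαk (pow_nonneg (sub_nonneg.2 hα.2) k), ENNReal.one_le_ofReal]
    exact one_le_rpow_add_one_sub_pow hα hδ k
  rw [tsub_le_iff_right, green, greenK, ← ENNReal.tsum_mul_left, ← ENNReal.tsum_add]
  refine ENNReal.tsum_le_tsum fun k => ?_
  rw [← mul_assoc, ← add_mul]
  exact le_mul_of_one_le_left zero_le (hweight k)

lemma exists_tsum_rpow_mul_srwP_le {d : ℕ} {δ : ℝ} (hδ : 0 ≤ δ) (hδd : δ + 1 < d / 2) :
    ∃ C : ℝ, 0 < C ∧ ∀ x : Fin d → ℤ, x ≠ 0 →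
      ∑' k : ℕ, ENNReal.ofReal ((k : ℝ) ^ δ) * srwP d k x ≤
        ENNReal.ofReal (C * nrmZ d x ^ (2 * δ)) * green d x := by
  have hd' : (2 : ℝ) < d := by linarith
  have hd : 2 < d := by exact_mod_cast hd'
  obtain ⟨c, hc, hlower⟩ := exists_mul_nrmZ_rpow_le_green hd
  set B : ℝ := (Real.pi * d / 2) ^ (d / 2 : ℝ) / (d / 2 - δ - 1)
  have hB0 : 0 ≤ B := div_nonneg (by positivity) (by linarith)
  refine ⟨1 + B / c, by positivity, fun x hx => ?_⟩
  have hr : 0 < nrmZ d x := nrmZ_pos_iff.2 hx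
  obtain ⟨N, hN⟩ := exists_nat_eq_nrmZ_sq x
  have hN0 : 0 < N := by
    rw [← Nat.cast_pos (α := ℝ), hN]
    positivity
  have hNpow (s : ℝ) : (N : ℝ) ^ s = nrmZ d x ^ (2 * s) := by
    rw [hN, ← Real.rpow_natCast, ← Real.rpow_mul hr.le, Nat.cast_two]
  have htail : B * (N : ℝ) ^ (δ + 1 - d / 2) ≤
      B / c * nrmZ d x ^ (2 * δ) * (green d x).toReal := by
    calc B * (N : ℝ) ^ (δ + 1 - d / 2)
        = B / c * nrmZ d x ^ (2 * δ) * (c * nrmZ d x ^ (2 - d : ℝ)) := by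
          rw [hNpow, show 2 * (δ + 1 - d / 2) = 2 * δ + (2 - d) by ring, Real.rpow_add hr]
          field_simp
      _ ≤ B / c * nrmZ d x ^ (2 * δ) * (green d x).toReal := by
          gcongr
          exact hlower x
  calc ∑' k : ℕ, ENNReal.ofReal ((k : ℝ) ^ δ) * srwP d k x
      ≤ ENNReal.ofReal ((N : ℝ) ^ δ) * green d x +
          ENNReal.ofReal (B * (N : ℝ) ^ (δ + 1 - d / 2)) :=
        tsum_rpow_mul_le (by positivity) hδ hδd (fun k hk => srwP_le (by omega) hk x) hN0
    _ ≤ ENNReal.ofReal (nrmZ d x ^ (2 * δ)) * green d x +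
          ENNReal.ofReal (B / c * nrmZ d x ^ (2 * δ)) * green d x := by
        rw [hNpow δ]
        gcongr
        refine (ENNReal.ofReal_le_ofReal htail).trans_eq ?_
        rw [ENNReal.ofReal_mul (by positivity), ENNReal.ofReal_toReal (green_ne_top hd x)]
    _ = ENNReal.ofReal ((1 + B / c) * nrmZ d x ^ (2 * δ)) * green d x := by
        rw [← add_mul, ← ENNReal.ofReal_add (by positivity) (by positivity), add_mul, one_mul]

theorem killed_green_near_bound_general {d : ℕ} {γ : ℝ} (hγ : γ ∈ Set.Icc 0 2)
    (hγd : γ < d - 2) :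
    ∃ C : ℝ, 0 < C ∧ ∀ α ∈ Set.Icc (0 : ℝ) 1, ∀ x : Fin d → ℤ, x ≠ 0 →
      green d x - greenK d α x ≤ ENNReal.ofReal (C * (nrmZ d x * √α) ^ γ) * green d x := by
  have hδ : γ / 2 ∈ Set.Icc 0 1 := ⟨by linarith [hγ.1], by linarith [hγ.2]⟩
  obtain ⟨C, hC, hbound⟩ := exists_tsum_rpow_mul_srwP_le hδ.1 (d := d) (by linarith)
  refine ⟨C, hC, fun α hα x hx => ?_⟩
  calc green d x - greenK d α x
      ≤ ENNReal.ofReal (α ^ (γ / 2)) *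
          ∑' k : ℕ, ENNReal.ofReal ((k : ℝ) ^ (γ / 2)) * srwP d k x :=
        green_sub_greenK_le hα hδ x
    _ ≤ ENNReal.ofReal (α ^ (γ / 2)) *
          (ENNReal.ofReal (C * nrmZ d x ^ (2 * (γ / 2))) * green d x) := by
        gcongr
        exact hbound x hx
    _ = ENNReal.ofReal (C * (nrmZ d x * √α) ^ γ) * green d x := by
        rw [← mul_assoc, ← ENNReal.ofReal_mul (Real.rpow_nonneg hα.1 _),
          mul_div_cancel₀ γ two_ne_zero, Real.mul_rpow (nrmZ_nonneg x) α.sqrt_nonneg,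
          Real.sqrt_eq_rpow, ← Real.rpow_mul hα.1, one_div_mul_eq_div]
        ring_nf

lemma exponent_mem_Icc_and_lt {D : ℝ} (hD : 2 < D) :
    2 * D * (D - 2) / (D ^ 2 + 2 * D - 4) ∈ Set.Icc 0 2 ∧
      2 * D * (D - 2) / (D ^ 2 + 2 * D - 4) < D - 2 := by
  have hden : 0 < D ^ 2 + 2 * D - 4 := by nlinarith
  refine ⟨⟨?_, ?_⟩, ?_⟩
  · exact div_nonneg (mul_nonneg (by linarith) (by linarith)) hden.le
  · rw [div_le_iff₀ hden]
    linarith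
  · rw [div_lt_iff₀ hden]
    nlinarith [mul_pos (sub_pos.2 hD) (show 0 < D ^ 2 - 4 by nlinarith)]

/-- For `d > 2` and `C₀ > 0` there are `C > 0` and `α₀ ∈ (0,1)`,
depending only on `d` and `C₀`, such that for all `α ∈ (0, α₀)` and all `x` with
`0 < ‖x‖ ≤ C₀/√α`: `g(x) − g_α(x) ≤ C (‖x‖√α)^{2d(d−2)/(d²+2d−4)} g(x)`. -/
theorem killed_green_near_bound (d : ℕ) (hd : 2 < d) (C₀ : ℝ) (hC₀ : 0 < C₀) :
    ∃ C α₀ : ℝ, 0 < C ∧ α₀ ∈ Set.Ioo (0 : ℝ) 1 ∧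
      ∀ α ∈ Set.Ioo (0 : ℝ) α₀, ∀ x : Fin d → ℤ,
        0 < nrmZ d x → nrmZ d x ≤ C₀ / Real.sqrt α →
          green d x - greenK d α x ≤
            ENNReal.ofReal
              (C * (nrmZ d x * Real.sqrt α) ^
                (2 * (d : ℝ) * ((d : ℝ) - 2) / ((d : ℝ) ^ 2 + 2 * d - 4))) * green d x := by
  have hd' : (2 : ℝ) < d := by exact_mod_cast hd
  obtain ⟨hγ, hγd⟩ := exponent_mem_Icc_and_lt hd'
  obtain ⟨C, hC, hbound⟩ := killed_green_near_bound_general hγ hγd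
  refine ⟨C, 1 / 2, hC, ⟨by norm_num, by norm_num⟩, fun α hα x hx _ => ?_⟩
  exact hbound α ⟨hα.1.le, by linarith [hα.2]⟩ x (nrmZ_pos_iff.1 hx)
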